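/- Let Λ be a finite-dimensional algebra over a field with global dimension at most d, where d ≥ 1. If X is a bounded complex of Λ-modules such that H^i(X) = 0 for every integer i not divisible by d, then X is isomorphic, in the derived category of Λ-modules, to the direct sum ⊕_{i∈ℤ} H^{di}(X)[−di] of its cohomology modules, each placed in its own degree with zero differentials. -/

import Mathlib

/-!
Statement 9.  Let `Λ` be a finite-dimensional algebra over a field with global dimension at
most `d ≥ 1`.  If `X` is a bounded complex of `Λ`-modules with `H^i(X) = 0` for every `i` not
divisible by `d`, then `X` is isomorphic in the derived category to the complex
`⊕_{i ∈ ℤ} H^{di}(X)[-di]` (its cohomology modules, each placed in its own degree, with zero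
differentials).
-/

universe w v u

open CategoryTheory Limits

section ProjDim

/-- `pdLE R n M` means `M` admits a projective resolution of length at most `n`. -/
def pdLE (R : Type v) [Ring R] : ℕ → ∀ (M : Type v) [AddCommGroup M] [Module R M], Prop
  | 0, M, _, _ => Module.Projective R M
  | n+1, M, _, _ => ∃ (P : Type v) (_ : AddCommGroup P) (_ : Module R P)
      (f : P →ₗ[R] M), Module.Projective R P ∧ Function.Surjective f ∧
      pdLE R n ↥(LinearMap.ker f)

/-- The projective dimension of a module, as an element of `ℕ∞`. -/
noncomputable def projDim (R : Type v) [Ring R] (M : Type v) [AddCommGroup M]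
    [Module R M] : ℕ∞ :=
  ⨅ (n : ℕ) (_ : pdLE R n M), (n : ℕ∞)

/-- The global dimension of a ring: the supremum of the projective dimensions of all
left modules. -/
noncomputable def globalDim (R : Type v) [Ring R] : ℕ∞ :=
  ⨆ (M : ModuleCat.{v} R), projDim R M

end ProjDim

section CohomologyComplex

variable (Λ : Type v) [Ring Λ] (d : ℕ) (X : CochainComplex (ModuleCat.{v} Λ) ℤ)

/-- The complex `⊕_{i∈ℤ} H^{di}(X)[-di]`: it has the cohomology `H^i(X)` in each degree `i`
divisible by `d` and `0` in all other degrees, with zero differentials. -/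
noncomputable def formalComplex : CochainComplex (ModuleCat.{v} Λ) ℤ where
  X i := if (d : ℤ) ∣ i then X.homology i else ModuleCat.of Λ PUnit
  d _ _ := 0
  shape _ _ _ := rfl
  d_comp_d' := by intros; simp

end CohomologyComplex

namespace DerivedCategory

open HomologicalComplex Pretriangulated CochainComplex.HomComplex

variable {C : Type u} [Category.{v} C] [Abelian C]

/-- A morphism from a single complex on a projective object which vanishes in homology is
null-homotopic. -/
lemma nonempty_homotopy_zero_of_homologyMap_single_eq_zero {P : C} [Projective P] {i : ℤ}
    {K : CochainComplex C ℤ} (φ : (single C (.up ℤ) i).obj P ⟶ K) (hφ : homologyMap φ i = 0) :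
    Nonempty (Homotopy φ 0) := by
  have h₀ : cyclesMap φ i ≫ K.homologyπ i = 0 := by
    rw [← homologyπ_naturality, hφ, comp_zero]
  have hex : (ShortComplex.mk (K.toCycles (i - 1) i) (K.homologyπ i) (by simp)).Exact :=
    ShortComplex.exact_of_g_is_cokernel _ (K.homologyIsCokernel (i - 1) i (by simp))
  let s := hex.liftFromProjective
    ((singleObjCyclesSelfIso (.up ℤ) i P).inv ≫ cyclesMap φ i) (by simp [h₀])
  have hs : s ≫ K.d (i - 1) i = (singleObjXSelf (.up ℤ) i P).inv ≫ φ.f i := by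
    have h₁ : s ≫ K.toCycles (i - 1) i =
        (singleObjCyclesSelfIso (.up ℤ) i P).inv ≫ cyclesMap φ i :=
      hex.liftFromProjective_comp _ _
    rw [← K.toCycles_i, reassoc_of% h₁, cyclesMap_i, singleObjCyclesSelfIso_inv_iCycles_assoc]
  refine ⟨(Cochain.equivHomotopy φ 0).symm
    ⟨Cochain.fromSingleMk s (by omega : i + (-1) = i - 1), ?_⟩⟩
  refine (Cochain.fromSingleEquiv (X := P) (add_zero i)).injective ?_
  rw [Cochain.ofHom_zero, add_zero]
  refine Eq.trans ?_ (congrArg (Cochain.fromSingleEquiv (X := P) (add_zero i))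
    (Cochain.δ_fromSingleMk s (by omega : i + (-1) = i - 1) 0 i (by omega))).symm
  rw [Cochain.fromSingleEquiv_fromSingleMk, hs]
  exact congrArg _ (Cochain.ofHom_v φ i)

lemma homologyMap_eq_zero_of_f_eq_zero {K L : CochainComplex C ℤ} (φ : K ⟶ L) (i : ℤ)
    (h : φ.f i = 0) : homologyMap φ i = 0 := by
  have : cyclesMap φ i = 0 := by
    rw [← cancel_mono (L.iCycles i), cyclesMap_i, h, comp_zero, zero_comp]
  rw [← cancel_epi (K.homologyπ i), homologyπ_naturality, this, zero_comp, comp_zero]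

variable [HasDerivedCategory.{w} C]

/-- The homology of the image of a cochain complex in the derived category. -/
noncomputable def homologyObjQIso (K : CochainComplex C ℤ) (i : ℤ) :
    (homologyFunctor C i).obj (Q.obj K) ≅ K.homology i :=
  (homologyFunctorFactors C i).app K

lemma homologyFunctor_map_Q {K L : CochainComplex C ℤ} (φ : K ⟶ L) (i : ℤ) :
    (homologyFunctor C i).map (Q.map φ) =
      (homologyObjQIso K i).hom ≫ homologyMap φ i ≫ (homologyObjQIso L i).inv := by
  rw [← Category.assoc, Iso.eq_comp_inv]
  exact homologyFunctorFactors_hom_naturality φ i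

lemma isIso_homologyFunctor_map_Q {K L : CochainComplex C ℤ} (φ : K ⟶ L) (i : ℤ)
    [IsIso (homologyMap φ i)] : IsIso ((homologyFunctor C i).map (Q.map φ)) := by
  rw [homologyFunctor_map_Q]
  infer_instance

lemma homologyFunctor_map_Q_eq_zero_iff {K L : CochainComplex C ℤ} (φ : K ⟶ L) (i : ℤ) :
    (homologyFunctor C i).map (Q.map φ) = 0 ↔ homologyMap φ i = 0 := by
  rw [homologyFunctor_map_Q]
  simp

lemma eq_zero_of_projective {P : C} [Projective P] {i : ℤ} {K : CochainComplex C ℤ}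
    (f : Q.obj ((single C (.up ℤ) i).obj P) ⟶ Q.obj K) (hf : (homologyFunctor C i).map f = 0) :
    f = 0 := by
  have : ∀ n, Projective (((single C (.up ℤ) i).obj P).X n) := fun n ↦ by
    by_cases h : n = i
    · subst h
      exact Projective.of_iso (singleObjXSelf (.up ℤ) n P).symm inferInstance
    · exact (isZero_single_obj_X _ _ _ _ h).projective
  have : CochainComplex.IsKProjective ((single C (.up ℤ) i).obj P) :=
    CochainComplex.isKProjective_of_projective _ i
  obtain ⟨g, hg⟩ := (CochainComplex.IsKProjective.Qh_map_bijective
    ((single C (.up ℤ) i).obj P) ((HomotopyCategory.quotient _ _).obj K)).2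
    ((quotientCompQhIso C).hom.app _ ≫ f ≫ (quotientCompQhIso C).inv.app K)
  obtain ⟨φ, rfl⟩ := (HomotopyCategory.quotient _ _).map_surjective g
  have hφ : Q.map φ = f := by
    have := (quotientCompQhIso C).hom.naturality φ
    rw [Functor.comp_map, hg] at this
    rw [← cancel_epi ((quotientCompQhIso C).hom.app _), ← this, Category.assoc, Category.assoc]
    congr 1
    exact (congrArg (f ≫ ·) (Iso.inv_hom_id_app _ _)).trans (Category.comp_id _)
  rw [← hφ, homologyFunctor_map_Q_eq_zero_iff] at hf
  obtain ⟨h⟩ := nonempty_homotopy_zero_of_homologyMap_single_eq_zero φ hf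
  rw [← hφ, Q_map_eq_of_homotopy _ h, Functor.map_zero]

/-- A morphism to the homology of a complex from a projective object placed in the corresponding
degree is induced by a morphism in the derived category. -/
lemma exists_map_eq_of_projective {P : C} [Projective P] {i : ℤ} {K : CochainComplex C ℤ}
    (u : (homologyFunctor C i).obj (Q.obj ((single C (.up ℤ) i).obj P)) ⟶
      (homologyFunctor C i).obj (Q.obj K)) :
    ∃ f : Q.obj ((single C (.up ℤ) i).obj P) ⟶ Q.obj K, (homologyFunctor C i).map f = u := by
  let v : ((single C (.up ℤ) i).obj P).homology i ⟶ K.homology i :=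
    (homologyObjQIso _ i).inv ≫ u ≫ (homologyObjQIso K i).hom
  let t : P ⟶ K.cycles i := Projective.factorThru
    ((singleObjHomologySelfIso (.up ℤ) i P).inv ≫ v) (K.homologyπ i)
  have ht : t ≫ K.homologyπ i = (singleObjHomologySelfIso (.up ℤ) i P).inv ≫ v :=
    Projective.factorThru_comp _ _
  let φ : (single C (.up ℤ) i).obj P ⟶ K := mkHomFromSingle (t ≫ K.iCycles i) (by simp)
  have hφ : cyclesMap φ i = (singleObjCyclesSelfIso (.up ℤ) i P).hom ≫ t := by
    rw [← cancel_mono (K.iCycles i), cyclesMap_i]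
    simp [φ, singleObjCyclesSelfIso]
  have hφ' : homologyMap φ i = v := by
    rw [← cancel_epi (homologyπ _ i), homologyπ_naturality, hφ, Category.assoc, ht,
      ← homologyπ_singleObjHomologySelfIso_hom, Category.assoc, Iso.hom_inv_id_assoc]
  refine ⟨Q.map φ, (homologyFunctor_map_Q φ i).trans ?_⟩
  rw [hφ', ← Iso.eq_inv_comp, Iso.comp_inv_eq, Category.assoc]

lemma epi_homologyFunctor_map_single {M N : C} (g : M ⟶ N) [Epi g] (i : ℤ) :
    Epi ((homologyFunctor C i).map (Q.map ((single C (.up ℤ) i).map g))) := by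
  have : Epi (homologyMap ((single C (.up ℤ) i).map g) i) := by
    have h := singleObjHomologySelfIso_hom_naturality (.up ℤ) i g
    rw [← Iso.eq_comp_inv] at h
    rw [h]
    infer_instance
  rw [homologyFunctor_map_Q]
  infer_instance

/-- Dévissage along a short exact sequence for the vanishing of morphisms in the derived category
from single complexes. -/
lemma eq_zero_of_shortExact {S : ShortComplex C} (hS : S.ShortExact) {i j : ℤ} (hj : j + 1 = i)
    {K : CochainComplex C ℤ}
    (h₁ : ∀ f : Q.obj ((single C (.up ℤ) j).obj S.X₁) ⟶ Q.obj K, f = 0)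
    (h₂ : ∀ f : Q.obj ((single C (.up ℤ) i).obj S.X₂) ⟶ Q.obj K,
      (homologyFunctor C i).map f = 0 → f = 0)
    (f : Q.obj ((single C (.up ℤ) i).obj S.X₃) ⟶ Q.obj K)
    (hf : (homologyFunctor C i).map f = 0) : f = 0 := by
  have hT := triangleOfSES_distinguished (hS.map_of_exact (single C (.up ℤ) i))
  have hf' : Q.map ((single C (.up ℤ) i).map S.g) ≫ f = 0 :=
    h₂ _ (by rw [CategoryTheory.Functor.map_comp, hf, comp_zero])
  obtain ⟨g, hg⟩ : ∃ g, f = triangleOfSESδ (hS.map_of_exact (single C (.up ℤ) i)) ≫ g :=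
    Triangle.yoneda_exact₃ _ hT f hf'
  let e := ((singleFunctors C).shiftIso 1 j i (by omega)).app S.X₁
  have hg' : g = 0 := by
    have := h₁ (e.inv ≫ g)
    exact (Iso.inv_comp_eq e).1 this |>.trans comp_zero
  exact hg.trans ((congrArg _ hg').trans comp_zero)

lemma exists_map_eq_of_shortExact {S : ShortComplex C} (hS : S.ShortExact) {i : ℤ}
    {K : CochainComplex C ℤ} [Projective S.X₂]
    (h₁ : ∀ f : Q.obj ((single C (.up ℤ) i).obj S.X₁) ⟶ Q.obj K,
      (homologyFunctor C i).map f = 0 → f = 0)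
    (u : (homologyFunctor C i).obj (Q.obj ((single C (.up ℤ) i).obj S.X₃)) ⟶
      (homologyFunctor C i).obj (Q.obj K)) :
    ∃ f : Q.obj ((single C (.up ℤ) i).obj S.X₃) ⟶ Q.obj K, (homologyFunctor C i).map f = u := by
  have hT := triangleOfSES_distinguished (hS.map_of_exact (single C (.up ℤ) i))
  obtain ⟨g, hg⟩ := exists_map_eq_of_projective
    ((homologyFunctor C i).map (Q.map ((single C (.up ℤ) i).map S.g)) ≫ u)
  have hg' : Q.map ((single C (.up ℤ) i).map S.f) ≫ g = 0 := h₁ _ (by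
    rw [CategoryTheory.Functor.map_comp, hg, ← Functor.map_comp_assoc, ← Functor.map_comp,
      ← Functor.map_comp, S.zero, Functor.map_zero, Functor.map_zero, Functor.map_zero, zero_comp])
  obtain ⟨f, hf⟩ : ∃ f, g = Q.map ((single C (.up ℤ) i).map S.g) ≫ f :=
    Triangle.yoneda_exact₂ _ hT g hg'
  refine ⟨f, ?_⟩
  have := hS.epi_g
  have := epi_homologyFunctor_map_single (C := C) S.g i
  rw [← cancel_epi ((homologyFunctor C i).map (Q.map ((single C (.up ℤ) i).map S.g))), ← hg, hf,
    Functor.map_comp]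

/-- A bounded complex with zero differentials is isomorphic in the derived category to any
bounded complex `K` such that the homology in each degree `i` is realised by a morphism from a
single complex. -/
lemma nonempty_iso_of_single {K Y : CochainComplex C ℤ} (hY : ∀ i j, Y.d i j = 0) (s : Finset ℤ)
    (hs : ∀ i ∉ s, IsZero (Y.X i)) (f : ∀ i, Q.obj ((single C (.up ℤ) i).obj (Y.X i)) ⟶ Q.obj K)
    (hf : ∀ i, IsIso ((homologyFunctor C i).map (f i))) : Nonempty (Q.obj K ≅ Q.obj Y) := by
  let a (i : ℤ) : (single C (.up ℤ) i).obj (Y.X i) ⟶ Y := mkHomFromSingle (𝟙 _) (by simp [hY])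
  let p (i : ℤ) : Y ⟶ (single C (.up ℤ) i).obj (Y.X i) := mkHomToSingle (𝟙 _) (by simp [hY])
  have hap (i : ℤ) : a i ≫ p i = 𝟙 _ := from_single_hom_ext (by simp [a, p])
  have hap' {i j : ℤ} (h : i ≠ j) : a i ≫ p j = 0 :=
    from_single_hom_ext ((isZero_single_obj_X _ _ _ _ h).eq_of_tgt _ _)
  have ha (i : ℤ) : IsIso (homologyMap (a i) i) := by
    refine ⟨homologyMap (p i) i, by rw [← homologyMap_comp, hap, homologyMap_id], ?_⟩
    rw [← homologyMap_comp, ← homologyMap_id, ← sub_eq_zero, ← homologyMap_sub]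
    exact homologyMap_eq_zero_of_f_eq_zero _ _ (by simp [a, p])
  have ha' (i : ℤ) : IsIso ((homologyFunctor C i).map (Q.map (a i))) :=
    isIso_homologyFunctor_map_Q _ _
  let g : Q.obj Y ⟶ Q.obj K := ∑ j ∈ s, Q.map (p j) ≫ f j
  have hg (i : ℤ) : Q.map (a i) ≫ g = f i := by
    rw [Preadditive.comp_sum, Finset.sum_eq_single i]
    · rw [← Functor.map_comp_assoc, hap, CategoryTheory.Functor.map_id, Category.id_comp]
    · intro j _ hj
      rw [← Functor.map_comp_assoc, hap' hj.symm, Functor.map_zero, zero_comp]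
    · intro hi
      have : IsZero (Q.obj ((single C (.up ℤ) i).obj (Y.X i))) :=
        (Q ⋙ 𝟭 _).map_isZero ((single C (.up ℤ) i).map_isZero (hs i hi))
      exact this.eq_of_src _ _
  have : IsIso g := (isIso_iff C g).2 fun i ↦ by
    have := hf i
    rw [← hg i, Functor.map_comp] at this
    exact IsIso.of_isIso_comp_left ((homologyFunctor C i).map (Q.map (a i))) _
  exact ⟨(asIso g).symm⟩

end DerivedCategory

section
variable {Λ : Type v} [Ring Λ] [HasDerivedCategory.{w} (ModuleCat.{v} Λ)]

open DerivedCategory HomologicalComplex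

lemma exists_pdLE_of_globalDim_le {R : Type v} [Ring R] {d : ℕ} (h : globalDim R ≤ d)
    (M : ModuleCat.{v} R) : ∃ n ≤ d, pdLE R n M := by
  by_contra! hM
  have h₁ : projDim R M ≤ d := (le_iSup (fun M : ModuleCat.{v} R ↦ projDim R M) M).trans h
  have h₂ : ((d + 1 : ℕ) : ℕ∞) ≤ projDim R M := le_iInf fun n ↦ le_iInf fun hn ↦ by
    have : d + 1 ≤ n := by
      by_contra! h'
      exact hM n (by omega) hn
    exact_mod_cast this
  have := h₂.trans h₁
  norm_cast at this
  omega

lemma eq_zero_of_pdLE (K : CochainComplex (ModuleCat.{v} Λ) ℤ) (n : ℕ) (M : Type v)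
    [AddCommGroup M] [Module Λ M] (hM : pdLE Λ n M) (i : ℤ)
    (hK : ∀ j, i - n ≤ j → j < i → IsZero (K.homology j))
    (f : Q.obj ((single _ (.up ℤ) i).obj (ModuleCat.of Λ M)) ⟶ Q.obj K)
    (hf : (homologyFunctor _ i).map f = 0) : f = 0 := by
  induction n generalizing M i with
  | zero =>
    have : Projective (ModuleCat.of Λ M) := (IsProjective.iff_projective M).1 hM
    exact eq_zero_of_projective f hf
  | succ n ih =>
    obtain ⟨P, _, _, p, hP, hp, hker⟩ := hM
    have : Projective (ModuleCat.of Λ P) := (IsProjective.iff_projective P).1 hP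
    push_cast at hK
    refine eq_zero_of_shortExact (LinearMap.shortExact_shortComplexKer hp)
      (sub_add_cancel i 1) (fun g ↦ ih _ hker _ (fun j h₁ h₂ ↦ hK j (by omega) (by omega)) g
        (IsZero.eq_of_tgt ?_ _ _)) (fun g hg ↦ eq_zero_of_projective (P := ModuleCat.of Λ P) g hg)
      f hf
    exact (hK (i - 1) (by omega) (by omega)).of_iso (homologyObjQIso K (i - 1))

lemma exists_map_eq_of_pdLE (K : CochainComplex (ModuleCat.{v} Λ) ℤ) {n d : ℕ}
    (hn : n ≤ d) (M : ModuleCat.{v} Λ) (hM : pdLE Λ n M) (i : ℤ)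
    (hK : ∀ j, i - d < j → j < i → IsZero (K.homology j))
    (u : (homologyFunctor _ i).obj (Q.obj ((single _ (.up ℤ) i).obj M)) ⟶
      (homologyFunctor _ i).obj (Q.obj K)) :
    ∃ f : Q.obj ((single _ (.up ℤ) i).obj M) ⟶ Q.obj K, (homologyFunctor _ i).map f = u := by
  cases n with
  | zero =>
    have : Projective M := (IsProjective.iff_projective M).1 hM
    exact exists_map_eq_of_projective u
  | succ n =>
    obtain ⟨P, _, _, p, hP, hp, hker⟩ := hM
    have : Projective p.shortComplexKer.X₂ := (IsProjective.iff_projective P).1 hP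
    exact exists_map_eq_of_shortExact (LinearMap.shortExact_shortComplexKer hp)
      (fun g hg ↦ eq_zero_of_pdLE K n _ hker i
        (fun j h₁ h₂ ↦ hK j (by omega) (by omega)) g hg) u

end

theorem stmt_9 (F : Type u) [Field F] (Λ : Type v) [Ring Λ] [Algebra F Λ]
    [FiniteDimensional F Λ] (d : ℕ) (hd : 1 ≤ d) (hgldim : globalDim Λ ≤ (d : ℕ∞))
    [HasDerivedCategory.{w} (ModuleCat.{v} Λ)]
    (X : CochainComplex (ModuleCat.{v} Λ) ℤ)
    (hbdd : ∃ n₀ n₁ : ℤ, ∀ i : ℤ, (i < n₀ ∨ n₁ < i) → IsZero (X.X i))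
    (hcoh : ∀ i : ℤ, ¬ ((d : ℤ) ∣ i) → IsZero (X.homology i)) :
    Nonempty (DerivedCategory.Q.obj X ≅ DerivedCategory.Q.obj (formalComplex Λ d X)) := by
  open DerivedCategory HomologicalComplex in
  have e (i : ℤ) : Nonempty ((formalComplex Λ d X).X i ≅ X.homology i) := by
    by_cases hi : (d : ℤ) ∣ i
    · exact ⟨eqToIso (if_pos hi)⟩
    · have h₀ : IsZero ((formalComplex Λ d X).X i) := by
        change IsZero (if (d : ℤ) ∣ i then X.homology i else ModuleCat.of Λ PUnit)
        rw [if_neg hi]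
        exact ModuleCat.isZero_of_subsingleton _
      exact ⟨h₀.iso (hcoh i hi)⟩
  replace e := fun i ↦ (e i).some
  have hf (i : ℤ) : ∃ f : Q.obj ((single _ (.up ℤ) i).obj ((formalComplex Λ d X).X i)) ⟶ Q.obj X,
      IsIso ((homologyFunctor _ i).map f) := by
    let u := homologyObjQIso ((single _ (.up ℤ) i).obj ((formalComplex Λ d X).X i)) i ≪≫
      singleObjHomologySelfIso _ _ _ ≪≫ e i ≪≫ (homologyObjQIso X i).symm
    suffices h : ∃ f, (homologyFunctor _ i).map f = u.hom by
      obtain ⟨f, hf⟩ := h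
      exact ⟨f, hf ▸ inferInstance⟩
    by_cases hi : (d : ℤ) ∣ i
    · obtain ⟨n, hn, hM⟩ := exists_pdLE_of_globalDim_le hgldim ((formalComplex Λ d X).X i)
      refine exists_map_eq_of_pdLE X hn _ hM i (fun j h₁ h₂ ↦ hcoh j fun hj ↦ ?_) _
      have := Int.le_of_dvd (by omega) (dvd_sub hi hj)
      omega
    · exact ⟨0, ((hcoh i hi).of_iso (homologyObjQIso X i)).eq_of_tgt _ _⟩
  choose f hf using hf
  obtain ⟨n₀, n₁, h⟩ := hbdd
  refine nonempty_iso_of_single (fun _ _ ↦ rfl) (Finset.Icc n₀ n₁) (fun i hi ↦ ?_) f hf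
  have hX : IsZero (X.X i) := h i (by rw [Finset.mem_Icc] at hi; omega)
  exact ((X.exactAt_iff_isZero_homology i).1 (ShortComplex.exact_of_isZero_X₂ _ hX)).of_iso (e i)
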